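/- For every integer n ≥ 1, the Wang shift Ω_n is aperiodic: Ω_n is nonempty, and for every valid configuration x ∈ Ω_n and every k ∈ ℤ^2 with k ≠ (0,0), one has σ^k(x) ≠ x. -/

import Mathlib

structure WangTile (C : Type*) where
  right : C
  top : C
  left : C
  bottom : C
deriving DecidableEq

abbrev Lbl : Type := ℤ × ℤ × ℤ

def Vn (n : ℤ) : Set Lbl :=
  {v | 0 ≤ v.1 ∧ v.1 ≤ v.2.1 ∧ v.2.1 ≤ 1 ∧ v.2.1 ≤ v.2.2 ∧ v.2.2 ≤ n + 1}

def hatT {C : Type*} (t : WangTile C) : WangTile C :=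
  ⟨t.top, t.right, t.bottom, t.left⟩

def whiteTiles (n : ℤ) : Set (WangTile Lbl) :=
  {t | ∃ i j : ℤ, 1 ≤ i ∧ i ≤ n ∧ 1 ≤ j ∧ j ≤ n ∧
    t = ⟨(1, 1, i + 1), (1, 1, j + 1), (1, 1, i), (1, 1, j)⟩}

def blueH (n : ℤ) : Set (WangTile Lbl) :=
  {t | ∃ i : ℤ, 0 ≤ i ∧ i ≤ n ∧ t = ⟨(0, 0, i + 1), (1, 1, 1), (0, 0, i), (1, 1, n)⟩}

def greenH (n : ℤ) : Set (WangTile Lbl) :=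
  {t | ∃ i : ℤ, 0 ≤ i ∧ i ≤ n ∧ t = ⟨(0, 1, i + 1), (1, 1, 1), (0, 0, i), (1, 1, n + 1)⟩}

def yellowH (n : ℤ) : Set (WangTile Lbl) :=
  {t | ∃ i : ℤ, 1 ≤ i ∧ i ≤ n ∧ t = ⟨(0, 1, i + 1), (1, 1, 2), (0, 1, i), (1, 1, n + 1)⟩}

def antiH (n : ℤ) : Set (WangTile Lbl) :=
  {t | ∃ i : ℤ, 1 ≤ i ∧ i ≤ n ∧ t = ⟨(0, 0, i + 1), (1, 1, 2), (0, 1, i), (1, 1, n)⟩}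

def junctionTile (n k l r s : ℤ) : WangTile Lbl :=
  ⟨(0, k, l), (0, r, s), (0, s, r + n), (0, l, k + n)⟩

def jPairs : Set (ℤ × ℤ) := {(0, 0), (0, 1), (1, 1)}

def junctions (n : ℤ) : Set (WangTile Lbl) :=
  {t | ∃ k l r s : ℤ, (k, l) ∈ jPairs ∧ (r, s) ∈ jPairs ∧ t = junctionTile n k l r s}

def Text (n : ℤ) : Set (WangTile Lbl) :=
  whiteTiles n ∪ blueH n ∪ greenH n ∪ yellowH n ∪ antiH n ∪
    hatT '' blueH n ∪ hatT '' greenH n ∪ hatT '' yellowH n ∪ hatT '' antiH n ∪ junctions n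

def Dset (n : ℤ) : Set (WangTile Lbl) :=
  {(⟨(0, 0, n + 1), (1, 1, 1), (0, 0, n), (1, 1, n)⟩ : WangTile Lbl),
    hatT (⟨(0, 0, n + 1), (1, 1, 1), (0, 0, n), (1, 1, n)⟩ : WangTile Lbl),
    junctionTile n 0 0 1 1, junctionTile n 1 1 0 0}

def Tmet (n : ℤ) : Set (WangTile Lbl) :=
  Text n \ (antiH n ∪ hatT '' antiH n ∪ Dset n)

def ValidConfig {C : Type*} (T : Set (WangTile C)) (x : ℤ × ℤ → WangTile C) : Prop :=
  (∀ m, x m ∈ T) ∧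
    (∀ m : ℤ × ℤ, (x m).right = (x (m.1 + 1, m.2)).left) ∧
    (∀ m : ℤ × ℤ, (x m).top = (x (m.1, m.2 + 1)).bottom)

def ValidPattern {C : Type*} (T : Set (WangTile C)) (w h : ℕ) (p : ℕ → ℕ → WangTile C) : Prop :=
  (∀ i j, i < w → j < h → p i j ∈ T) ∧
    (∀ i j, i + 1 < w → j < h → (p i j).right = (p (i + 1) j).left) ∧
    (∀ i j, i < w → j + 1 < h → (p i j).top = (p i (j + 1)).bottom)

def bottomWord {C : Type*} (w : ℕ) (p : ℕ → ℕ → WangTile C) : List C :=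
  (List.range w).map fun i => (p i 0).bottom

def topWord {C : Type*} (w h : ℕ) (p : ℕ → ℕ → WangTile C) : List C :=
  (List.range w).map fun i => (p i (h - 1)).top

def leftWord {C : Type*} (h : ℕ) (p : ℕ → ℕ → WangTile C) : List C :=
  (List.range h).map fun j => (p 0 j).left

def rightWord {C : Type*} (w h : ℕ) (p : ℕ → ℕ → WangTile C) : List C :=
  (List.range h).map fun j => (p (w - 1) j).right

def tau (n : ℤ) (v : Lbl) : List Lbl :=
  if v.1 = v.2.2 then
    (0, v.1 - v.2.1 + 1, n + 1) :: List.replicate (n - v.2.2).toNat (1, 1, n + 1)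
  else
    (0, v.1 - v.2.1 + 1, n) ::
      (List.replicate (v.2.2 - v.1 - 1).toNat (1, 1, n) ++
        List.replicate (n + 1 - v.2.2).toNat (1, 1, n + 1))

open Finset in
/-- A positive period of a sequence whose partial sums satisfy the two balance estimates
would make `n ^ 2 + 4` a perfect square. -/
lemma balance_not_periodic (n : ℤ) (hn : 1 ≤ n) (c d : ℕ → ℤ) (K : ℤ)
    (h₁ : ∀ N M : ℕ, |(N : ℤ) * M - n * N * ∑ j ∈ range M, d j
      - (∑ j ∈ range M, d j) * ∑ i ∈ range N, c i| ≤ K * (N + M))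
    (h₂ : ∀ N M : ℕ, |(N : ℤ) * M - n * M * ∑ i ∈ range N, c i
      - (∑ j ∈ range M, d j) * ∑ i ∈ range N, c i| ≤ K * (N + M))
    (p : ℕ) (hp : 0 < p) (hd : ∀ j, d (j + p) = d j) : False := by
  set g := ∑ j ∈ range p, d j with hg
  have hper : ∀ k j, d (k * p + j) = d j := by
    intro k
    induction k with
    | zero => simp
    | succ k ih => intro j; rw [← ih j, ← hd (k * p + j)]; congr 1; ring
  have hG : ∀ k : ℕ, ∑ j ∈ range (k * p), d j = k * g := by
    intro k
    induction k with
    | zero => simp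
    | succ k ih =>
      rw [Nat.succ_mul, sum_range_add, ih, sum_congr rfl fun j _ => hper k j, ← hg]
      push_cast; ring
  have hquad : (p : ℤ) ^ 2 - n * g * p - g ^ 2 = 0 := by
    by_contra hne
    set e := (p : ℤ) ^ 2 - n * g * p - g ^ 2 with he
    have hbound : ∀ k : ℕ, 0 < k → (k : ℤ) ≤ (|n * p + g| + |g|) * (K * (1 + p)) := by
      intro k hk
      have hk' : (0 : ℤ) < k := by exact_mod_cast hk
      have a₁ := h₁ k (k * p)
      have a₂ := h₂ k (k * p)
      rw [hG k] at a₁ a₂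
      set F := ∑ i ∈ range k, c i
      push_cast at a₁ a₂
      have cancel : ∀ u v w z : ℤ, |w| ≤ z → w = k * u → z = k * v → |u| ≤ v := by
        rintro u v _ _ h rfl rfl
        rw [abs_mul, abs_of_pos hk'] at h
        exact le_of_mul_le_mul_left h hk'
      have b₁ : |k * (p - n * g) - g * F| ≤ K * (1 + p) :=
        cancel _ _ _ _ a₁ (by ring) (by ring)
      have b₂ : |k * p - (n * p + g) * F| ≤ K * (1 + p) :=
        cancel _ _ _ _ a₂ (by ring) (by ring)
      have hcomb : (n * p + g) * (k * (p - n * g) - g * F) - g * (k * p - (n * p + g) * F)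
          = k * (n * e) := by rw [he]; ring
      have hne' : 1 ≤ |n * e| := Int.one_le_abs (mul_ne_zero (by omega) hne)
      calc (k : ℤ) ≤ k * |n * e| := le_mul_of_one_le_right hk'.le hne'
        _ = |(n * p + g) * (k * (p - n * g) - g * F) - g * (k * p - (n * p + g) * F)| := by
          rw [hcomb, abs_mul (k : ℤ), abs_of_pos hk']
        _ ≤ |n * p + g| * |k * (p - n * g) - g * F| + |g| * |k * p - (n * p + g) * F| := by
          rw [← abs_mul, ← abs_mul]; exact abs_sub _ _
        _ ≤ _ := by
          rw [add_mul |n * p + g|]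
          exact add_le_add (mul_le_mul_of_nonneg_left b₁ (abs_nonneg _))
            (mul_le_mul_of_nonneg_left b₂ (abs_nonneg _))
    have := hbound (((|n * p + g| + |g|) * (K * (1 + p))).toNat + 1) (Nat.succ_pos _)
    push_cast at this
    have := Int.self_le_toNat ((|n * p + g| + |g|) * (K * (1 + p)))
    omega
  have hp' : (0 : ℤ) < p := by exact_mod_cast hp
  have hsq : (2 * g + n * p) ^ 2 = (n ^ 2 + 4) * (p : ℤ) ^ 2 := by linear_combination (-4) * hquad
  obtain ⟨m, hm⟩ : (p : ℤ) ∣ 2 * g + n * p :=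
    (Int.pow_dvd_pow_iff two_ne_zero).1 (hsq ▸ Dvd.intro_left _ rfl)
  have hm2 : |m| ^ 2 = n ^ 2 + 4 := by
    rw [sq_abs]
    have : (p : ℤ) ^ 2 * m ^ 2 = p ^ 2 * (n ^ 2 + 4) := by rw [← mul_pow, ← hm, hsq]; ring
    exact mul_left_cancel₀ (by positivity) this
  have hm0 := abs_nonneg m
  generalize |m| = q at hm2 hm0
  have hlow : n < q := by nlinarith
  rcases hn.eq_or_lt with rfl | hn2
  · have : q < 3 := by nlinarith
    interval_cases q; omega
  · nlinarith

/-- The additive identities satisfied by every tile: along a row, the change of the last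
coordinate from bottom to top is, up to a telescoping term, determined by the types of the row
and of the column. -/
lemma tile_balance {n : ℤ} (hn : 1 ≤ n) {t : WangTile Lbl} (ht : t ∈ Text n) :
    t.right.1 = t.left.1 ∧ t.top.1 = t.bottom.1 ∧
    (0 ≤ t.bottom.2.1 ∧ t.bottom.2.1 ≤ 1 ∧ 0 ≤ t.bottom.2.2 ∧ t.bottom.2.2 ≤ n + 1) ∧
    (0 ≤ t.left.2.1 ∧ t.left.2.1 ≤ 1 ∧ 0 ≤ t.left.2.2 ∧ t.left.2.2 ≤ n + 1) ∧
    t.top.2.2 - t.bottom.2.2 = 1 - n * (1 - t.left.1) - (1 - t.left.1) * (1 - t.bottom.1)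
      - (t.right.2.1 - t.left.2.1) ∧
    t.right.2.2 - t.left.2.2 = 1 - n * (1 - t.bottom.1) - (1 - t.bottom.1) * (1 - t.left.1)
      - (t.top.2.1 - t.bottom.2.1) := by
  rcases ht with ((((((((h | h) | h) | h) | h) | h) | h) | h) | h) | h
  · obtain ⟨i, j, hi, hi', hj, hj', rfl⟩ := h
    dsimp only; omega
  iterate 4
    obtain ⟨i, hi, hi', rfl⟩ := h
    dsimp only; omega
  iterate 4
    obtain ⟨_, ⟨i, hi, hi', rfl⟩, rfl⟩ := h
    dsimp only [hatT]; omega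
  · obtain ⟨k, l, r, s, hkl, hrs, rfl⟩ := h
    simp only [jPairs, Set.mem_insert_iff, Set.mem_singleton_iff, Prod.mk.injEq] at hkl hrs
    dsimp only [junctionTile]; omega

open Finset in
/-- Summing the additive identities of the tiles over a rectangle leaves a boundary term. -/
lemma rectangle_balance (n : ℤ) (N M : ℕ) (c d : ℕ → ℤ) (V U : ℕ → ℕ → ℤ)
    (hV : ∀ i j, 0 ≤ V i j ∧ V i j ≤ n + 1) (hU : ∀ i j, 0 ≤ U i j ∧ U i j ≤ 1)
    (h : ∀ i j, V i (j + 1) - V i j = 1 - n * d j - d j * c i - (U (i + 1) j - U i j)) :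
    |(N : ℤ) * M - n * N * ∑ j ∈ range M, d j
      - (∑ j ∈ range M, d j) * ∑ i ∈ range N, c i| ≤ (n + 1) * N + M := by
  have hsum : (N : ℤ) * M - n * N * ∑ j ∈ range M, d j
      - (∑ j ∈ range M, d j) * ∑ i ∈ range N, c i
      = ∑ i ∈ range N, (V i M - V i 0) + ∑ j ∈ range M, (U N j - U 0 j) := by
    have e₁ : ∑ i ∈ range N, (V i M - V i 0)
        = ∑ i ∈ range N, ∑ j ∈ range M, (V i (j + 1) - V i j) :=
      sum_congr rfl fun i _ => (sum_range_sub (V i) M).symm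
    have e₂ : ∑ j ∈ range M, (U N j - U 0 j)
        = ∑ i ∈ range N, ∑ j ∈ range M, (U (i + 1) j - U i j) := by
      rw [sum_comm]
      exact sum_congr rfl fun j _ => (sum_range_sub (fun i => U i j) N).symm
    rw [e₁, e₂, ← sum_add_distrib]
    simp_rw [← sum_add_distrib, h, sub_add_cancel, sum_sub_distrib, ← mul_sum, ← sum_mul]
    simp only [sum_const, card_range, nsmul_eq_mul, mul_one, ← mul_sum]
    ring
  rw [hsum]
  refine (abs_add_le _ _).trans (add_le_add ?_ ?_)
  · refine (abs_sum_le_sum_abs _ _).trans ((sum_le_card_nsmul _ _ (n + 1) fun i _ => ?_).trans ?_)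
    · rw [abs_le]; have := hV i M; have := hV i 0; omega
    · simp [mul_comm]
  · refine (abs_sum_le_sum_abs _ _).trans ((sum_le_card_nsmul _ _ 1 fun j _ => ?_).trans ?_)
    · rw [abs_le]; have := hU N j; have := hU 0 j; omega
    · simp

/-- A valid configuration has no nonzero period. -/
lemma not_periodic (n : ℤ) (hn : 1 ≤ n) (x : ℤ × ℤ → WangTile Lbl)
    (hx : ValidConfig (Text n) x) (k : ℤ × ℤ) (hk : k ≠ (0, 0)) :
    (fun m : ℤ × ℤ => x (m.1 + k.1, m.2 + k.2)) ≠ x := by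
  intro hper
  obtain ⟨hT, hH, hV⟩ := hx
  have hper' : ∀ a b, x (a + k.1, b + k.2) = x (a, b) := fun a b => congrFun hper (a, b)
  have bal := fun a b => tile_balance hn (hT (a, b))
  have hH' : ∀ a b, (x (a, b)).right = (x (a + 1, b)).left := fun a b => hH (a, b)
  have hV' : ∀ a b, (x (a, b)).top = (x (a, b + 1)).bottom := fun a b => hV (a, b)
  have hrow : ∀ a b, (x (a, b)).left.1 = (x (0, b)).left.1 := by
    intro a b
    induction a using Int.induction_on with
    | zero => rfl
    | succ i ih => rw [← hH', (bal _ _).1, ih]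
    | pred i ih =>
      rw [← ih, ← (bal _ _).1, hH', sub_add_cancel]
  have hcol : ∀ a b, (x (a, b)).bottom.1 = (x (a, 0)).bottom.1 := by
    intro a b
    induction b using Int.induction_on with
    | zero => rfl
    | succ i ih => rw [← hV', (bal _ _).2.1, ih]
    | pred i ih =>
      rw [← ih, ← (bal _ _).2.1, hV', sub_add_cancel]
  have hrowper : ∀ b, (x (0, b + k.2)).left.1 = (x (0, b)).left.1 := fun b => by
    rw [← hrow (0 + k.1), hper']
  have hcolper : ∀ a, (x (a + k.1, 0)).bottom.1 = (x (a, 0)).bottom.1 := fun a => by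
    rw [← hcol _ (0 + k.2), hper']
  let d : ℕ → ℤ := fun j => 1 - (x (0, j)).left.1
  let c : ℕ → ℤ := fun i => 1 - (x (i, 0)).bottom.1
  have est₁ := fun N M : ℕ => rectangle_balance n N M c d
    (fun i j => (x (i, j)).bottom.2.2) (fun i j => (x (i, j)).left.2.1)
    (fun i j => (bal i j).2.2.1.2.2) (fun i j => ⟨(bal i j).2.2.2.1.1, (bal i j).2.2.2.1.2.1⟩)
    (fun i j => by
      have h := (bal i j).2.2.2.2.1
      rw [hH', hV', hrow, hcol] at h
      rw [← hrow] at h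
      simp only [c, d]
      push_cast
      rw [h, hrow])
  have est₂ := fun N M : ℕ => rectangle_balance n M N d c
    (fun j i => (x (i, j)).left.2.2) (fun j i => (x (i, j)).bottom.2.1)
    (fun j i => (bal i j).2.2.2.1.2.2) (fun j i => ⟨(bal i j).2.2.1.1, (bal i j).2.2.1.2.1⟩)
    (fun j i => by
      have h := (bal i j).2.2.2.2.2
      rw [hH', hV', hrow i, hcol i] at h
      simp only [c, d]
      push_cast
      exact h)
  have nat_period : ∀ (f : ℤ → ℤ) (q : ℤ), (∀ a, f (a + q) = f a) →
      ∀ j : ℕ, f ((j + q.natAbs : ℕ) : ℤ) = f j := by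
    intro f q hf j
    push_cast
    rcases abs_choice q with h | h <;> rw [h]
    · exact hf _
    · rw [← hf, neg_add_cancel_right]
  have weaken : ∀ N M : ℕ, (n + 1) * (N : ℤ) + M ≤ (n + 1) * (N + M) := fun N M => by
    nlinarith [Int.natCast_nonneg M]
  by_cases h2 : k.2 = 0
  · have h1 : k.1 ≠ 0 := fun h1 => hk (Prod.ext h1 h2)
    refine balance_not_periodic n hn d c (n + 1) (fun N M => ?_) (fun N M => ?_) k.1.natAbs
      (Int.natAbs_pos.2 h1) (nat_period (fun a => 1 - (x (a, 0)).bottom.1) _ fun a => by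
        simp only [hcolper])
    · exact (est₂ M N).trans (weaken N M)
    · refine le_trans (le_of_eq ?_) ((est₁ M N).trans ((weaken M N).trans_eq (by ring)))
      congr 1; ring
  · refine balance_not_periodic n hn c d (n + 1) (fun N M => ?_) (fun N M => ?_) k.2.natAbs
      (Int.natAbs_pos.2 h2) (nat_period (fun b => 1 - (x (0, b)).left.1) _ fun b => by
        simp only [hrowper])
    · exact (est₁ N M).trans (weaken N M)
    · refine le_trans (le_of_eq ?_) ((est₂ N M).trans ((weaken M N).trans_eq (by ring)))
      congr 1; ring

/-! Membership of the individual tiles in the metallic mean tile set. -/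

lemma white_mem {n i j : ℤ} (hi : 1 ≤ i) (hi' : i ≤ n) (hj : 1 ≤ j) (hj' : j ≤ n) :
    (⟨(1, 1, i + 1), (1, 1, j + 1), (1, 1, i), (1, 1, j)⟩ : WangTile Lbl) ∈ Tmet n :=
  ⟨by simp only [Text, Set.mem_union]
      iterate 9 left
      exact ⟨i, j, hi, hi', hj, hj', rfl⟩,
   by simp [antiH, Dset, hatT, junctionTile]⟩

lemma blue_mem {n i : ℤ} (hi : 0 ≤ i) (hi' : i < n) :
    (⟨(0, 0, i + 1), (1, 1, 1), (0, 0, i), (1, 1, n)⟩ : WangTile Lbl) ∈ Tmet n ∧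
    (⟨(1, 1, 1), (0, 0, i + 1), (1, 1, n), (0, 0, i)⟩ : WangTile Lbl) ∈ Tmet n := by
  have h : (⟨(0, 0, i + 1), (1, 1, 1), (0, 0, i), (1, 1, n)⟩ : WangTile Lbl) ∈ blueH n :=
    ⟨i, hi, hi'.le, rfl⟩
  have h' : (⟨(1, 1, 1), (0, 0, i + 1), (1, 1, n), (0, 0, i)⟩ : WangTile Lbl) ∈ hatT '' blueH n :=
    ⟨_, h, rfl⟩
  refine ⟨⟨by simp only [Text, Set.mem_union, h]; tauto,
    by simp [antiH, Dset, hatT, junctionTile, hi'.ne]⟩,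
    ⟨by simp only [Text, Set.mem_union, h']; tauto,
    by simp [antiH, Dset, hatT, junctionTile, hi'.ne]⟩⟩

lemma green_mem {n i : ℤ} (hi : 0 ≤ i) (hi' : i ≤ n) :
    (⟨(0, 1, i + 1), (1, 1, 1), (0, 0, i), (1, 1, n + 1)⟩ : WangTile Lbl) ∈ Tmet n ∧
    (⟨(1, 1, 1), (0, 1, i + 1), (1, 1, n + 1), (0, 0, i)⟩ : WangTile Lbl) ∈ Tmet n := by
  have h : (⟨(0, 1, i + 1), (1, 1, 1), (0, 0, i), (1, 1, n + 1)⟩ : WangTile Lbl) ∈ greenH n :=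
    ⟨i, hi, hi', rfl⟩
  have h' : (⟨(1, 1, 1), (0, 1, i + 1), (1, 1, n + 1), (0, 0, i)⟩ : WangTile Lbl) ∈ hatT '' greenH n :=
    ⟨_, h, rfl⟩
  refine ⟨⟨by simp only [Text, Set.mem_union, h]; tauto,
    by simp [antiH, Dset, hatT, junctionTile]⟩,
    ⟨by simp only [Text, Set.mem_union, h']; tauto,
    by simp [antiH, Dset, hatT, junctionTile]⟩⟩

lemma yellow_mem {n i : ℤ} (hi : 1 ≤ i) (hi' : i ≤ n) :
    (⟨(0, 1, i + 1), (1, 1, 2), (0, 1, i), (1, 1, n + 1)⟩ : WangTile Lbl) ∈ Tmet n ∧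
    (⟨(1, 1, 2), (0, 1, i + 1), (1, 1, n + 1), (0, 1, i)⟩ : WangTile Lbl) ∈ Tmet n := by
  have h : (⟨(0, 1, i + 1), (1, 1, 2), (0, 1, i), (1, 1, n + 1)⟩ : WangTile Lbl) ∈ yellowH n :=
    ⟨i, hi, hi', rfl⟩
  have h' : (⟨(1, 1, 2), (0, 1, i + 1), (1, 1, n + 1), (0, 1, i)⟩ : WangTile Lbl) ∈ hatT '' yellowH n :=
    ⟨_, h, rfl⟩
  refine ⟨⟨by simp only [Text, Set.mem_union, h]; tauto,
    by simp [antiH, Dset, hatT, junctionTile]⟩,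
    ⟨by simp only [Text, Set.mem_union, h']; tauto,
    by simp [antiH, Dset, hatT, junctionTile]⟩⟩

lemma junction_mem {n k l r s : ℤ} (hkl : (k, l) ∈ jPairs) (hrs : (r, s) ∈ jPairs)
    (h : l = 1 ∨ r = 0) (h' : s = 1 ∨ k = 0) :
    (⟨(0, k, l), (0, r, s), (0, s, r + n), (0, l, k + n)⟩ : WangTile Lbl) ∈ Tmet n := by
  refine ⟨Or.inr ⟨k, l, r, s, hkl, hrs, rfl⟩, ?_⟩
  simp [antiH, Dset, hatT, junctionTile]
  omega

/-- The bottom label of the tile coding the point `(x, y)` of the unit square, where `θ` is the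
inverse of the metallic mean `n + θ`. -/
noncomputable def bottomCode (n : ℤ) (θ x y : ℝ) : Lbl :=
  if x + θ < 1 then (1, 1, 1 + ⌊(n + θ) * y + x⌋)
  else (0, if n + θ ≤ (n + θ) * x + y then 1 else 0, ⌊(n + θ) * y + x⌋)

/-- The tile coding a point of the unit square, given also its translated coordinates. -/
noncomputable def codeTile (n : ℤ) (θ x y x' y' : ℝ) : WangTile Lbl :=
  ⟨bottomCode n θ y x', bottomCode n θ x y', bottomCode n θ y x, bottomCode n θ x y⟩

/-! The coding of the rotation by `θ` in both coordinates is made of tiles of `Tmet n`. -/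

lemma codeTile_white_mem {n : ℤ} {θ x y : ℝ} (hn : 1 ≤ n) (hθ : 0 < θ) (hβ : θ * (n + θ) = 1)
    (hx : 0 ≤ x) (hy : 0 ≤ y) (hxA : x + θ < 1) (hyA : y + θ < 1) :
    codeTile n θ x y (x + θ) (y + θ) ∈ Tmet n := by
  have hn' : (1 : ℝ) ≤ n := by exact_mod_cast hn
  have hshift : ∀ a b : ℝ, (n + θ) * (a + θ) + b = (n + θ) * a + b + (1 : ℤ) := fun a b => by
    push_cast; linear_combination hβ
  have hrange : ∀ a b : ℝ, 0 ≤ a → 0 ≤ b → a + θ < 1 → b + θ < 1 →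
      0 ≤ ⌊(n + θ) * a + b⌋ ∧ ⌊(n + θ) * a + b⌋ < n := fun a b ha hb ha' hb' => by
    refine ⟨Int.floor_nonneg.2 (by positivity), Int.floor_lt.2 ?_⟩
    nlinarith
  have h₁ := hrange x y hx hy hxA hyA
  have h₂ := hrange y x hy hx hyA hxA
  simp only [codeTile, bottomCode, if_pos hxA, if_pos hyA, hshift, Int.floor_add_intCast]
  simp only [← add_assoc]
  exact white_mem (by omega) (by omega) (by omega) (by omega)

lemma codeTile_horizontal_mem {n : ℤ} {θ x y : ℝ} (hn : 1 ≤ n) (hθ : 0 < θ)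
    (hβ : θ * (n + θ) = 1) (hx : 0 ≤ x) (hy : y < 1) (hxA : x + θ < 1) (hyB : ¬ y + θ < 1) :
    codeTile n θ x y (x + θ) (y + θ - 1) ∈ Tmet n ∧
    codeTile n θ y x (y + θ - 1) (x + θ) ∈ Tmet n := by
  have hn' : (1 : ℝ) ≤ n := by exact_mod_cast hn
  have hyB' : 1 ≤ y + θ := not_lt.1 hyB
  have hright : ⌊(n + θ) * (x + θ) + y⌋ = ⌊(n + θ) * x + y⌋ + 1 := by
    rw [← Int.floor_add_one]; congr 1; linear_combination hβ
  have htop : (n + θ) * (y + θ - 1) + x = (n + θ) * y + x + 1 - (n + θ) := by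
    linear_combination hβ
  have hi : 0 ≤ ⌊(n + θ) * x + y⌋ := Int.floor_nonneg.2 (by nlinarith)
  have hi' : ⌊(n + θ) * x + y⌋ < n + 1 := Int.floor_lt.2 (by push_cast; nlinarith)
  have hlow : (n : ℝ) - 1 ≤ (n + θ) * y + x := by nlinarith
  have hupp : (n + θ) * y + x < n + 1 := by nlinarith
  have hright' : (n + θ ≤ (n + θ) * y + (x + θ)) ↔ (n : ℝ) ≤ (n + θ) * y + x := by
    constructor <;> intro h <;> linarith
  simp only [codeTile, bottomCode, if_pos hxA, if_neg hyB, hright, hright', htop]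
  rcases lt_or_ge ((n + θ) * y + x) n with h | h
  · have hb : ⌊(n + θ) * y + x⌋ = n - 1 :=
      Int.floor_eq_iff.2 ⟨by push_cast; linarith, by push_cast; linarith⟩
    have ht : ⌊(n + θ) * y + x + 1 - (n + θ)⌋ = 0 :=
      Int.floor_eq_iff.2 ⟨by push_cast; nlinarith, by push_cast; linarith⟩
    have hi'' : ⌊(n + θ) * x + y⌋ < n := Int.floor_lt.2 (by nlinarith)
    rw [if_neg (by linarith), if_neg (by linarith), hb, ht, add_sub_cancel]
    exact blue_mem hi hi''
  have hb : ⌊(n + θ) * y + x⌋ = n :=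
    Int.floor_eq_iff.2 ⟨h, hupp⟩
  rcases lt_or_ge ((n + θ) * y + x) (n + θ) with h' | h'
  · have ht : ⌊(n + θ) * y + x + 1 - (n + θ)⌋ = 0 :=
      Int.floor_eq_iff.2 ⟨by push_cast; nlinarith, by push_cast; linarith⟩
    rw [if_pos h, if_neg (by linarith), hb, ht, add_comm 1 n]
    exact green_mem hi (by omega)
  · have ht : ⌊(n + θ) * y + x + 1 - (n + θ)⌋ = 1 :=
      Int.floor_eq_iff.2 ⟨by push_cast; linarith, by push_cast; nlinarith⟩
    have hi'' : 1 ≤ ⌊(n + θ) * x + y⌋ := Int.le_floor.2 (by push_cast; nlinarith)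
    rw [if_pos h, if_pos h', hb, ht, add_comm 1 n]
    exact yellow_mem hi'' (by omega)

lemma codeTile_junction_mem {n : ℤ} {θ x y : ℝ} (hn : 1 ≤ n) (hθ : 0 < θ) (hβ : θ * (n + θ) = 1)
    (hx : x < 1) (hy : y < 1) (hxB : ¬ x + θ < 1) (hyB : ¬ y + θ < 1) :
    codeTile n θ x y (x + θ - 1) (y + θ - 1) ∈ Tmet n := by
  have hn' : (1 : ℝ) ≤ n := by exact_mod_cast hn
  have hxB' : 1 ≤ x + θ := not_lt.1 hxB
  have hyB' : 1 ≤ y + θ := not_lt.1 hyB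
  have hwrap : ∀ a b : ℝ, (n + θ) * (a + θ - 1) + b = (n + θ) * a + b + 1 - (n + θ) :=
    fun a b => by linear_combination hβ
  have hwrap' : ∀ a b : ℝ, (n + θ ≤ (n + θ) * a + (b + θ - 1)) ↔ (n : ℝ) + 1 ≤ (n + θ) * a + b :=
    fun a b => by constructor <;> intro h <;> linarith
  have hfloor : ∀ a b : ℝ, a < 1 → b < 1 → 1 ≤ a + θ → 1 ≤ b + θ →
      ⌊(n + θ) * a + b⌋ = (if (n : ℝ) + 1 ≤ (n + θ) * a + b then 1 else 0) + n ∧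
      ⌊(n + θ) * a + b + 1 - (n + θ)⌋ = if n + θ ≤ (n + θ) * a + b then 1 else 0 := by
    intro a b ha hb ha' hb'
    have hlow : (n : ℝ) ≤ (n + θ) * a + b := by nlinarith
    constructor <;> split_ifs with h <;> rw [Int.floor_eq_iff] <;> push_cast <;>
      constructor <;> nlinarith
  have himp : ∀ a b : ℝ, a < 1 → b < 1 → 1 ≤ a + θ → 1 ≤ b + θ →
      (n : ℝ) + 1 ≤ (n + θ) * a + b → n + θ ≤ (n + θ) * b + a := by
    intro a b ha hb ha' hb' h
    nlinarith
  have hθ' : θ < 1 := by nlinarith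
  have himp' : ∀ a b : ℝ, (if n + θ ≤ (n + θ) * a + b then 1 else 0 : ℤ) = 1 ∨
      (if (n : ℝ) + 1 ≤ (n + θ) * a + b then 1 else 0 : ℤ) = 0 := by
    intro a b
    split_ifs <;> first | exact Or.inl rfl | exact Or.inr rfl | linarith
  have hpairs : ∀ a b : ℝ, a < 1 → b < 1 → 1 ≤ a + θ → 1 ≤ b + θ →
      ((if (n : ℝ) + 1 ≤ (n + θ) * a + b then 1 else 0 : ℤ),
        (if n + θ ≤ (n + θ) * b + a then 1 else 0 : ℤ)) ∈ jPairs := by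
    intro a b ha hb ha' hb'
    have := himp a b ha hb ha' hb'
    split_ifs <;> simp_all [jPairs]
  have h₁ := hfloor x y hx hy hxB' hyB'
  have h₂ := hfloor y x hy hx hyB' hxB'
  simp only [codeTile, bottomCode, if_neg hxB, if_neg hyB, hwrap, hwrap', h₁, h₂]
  refine junction_mem (hpairs y x hy hx hyB' hxB') (hpairs x y hx hy hxB' hyB') ?_ ?_
  · exact himp' x y
  · exact himp' y x

lemma fract_succ_mul {θ : ℝ} (hθ : 0 < θ) (hθ' : θ < 1) (a : ℤ) :
    Int.fract (((a + 1 : ℤ) : ℝ) * θ) = if Int.fract (a * θ) + θ < 1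
      then Int.fract (a * θ) + θ else Int.fract (a * θ) + θ - 1 := by
  have h₀ := Int.fract_nonneg (a * θ)
  have h₁ := Int.fract_lt_one (a * θ)
  have h₂ := Int.floor_add_fract (a * θ)
  split_ifs with h
  · exact Int.fract_eq_iff.2 ⟨by linarith, h, ⌊a * θ⌋, by push_cast; linarith⟩
  · exact Int.fract_eq_iff.2 ⟨by linarith, by linarith, ⌊a * θ⌋ + 1, by push_cast; linarith⟩

/-- Coding a toral rotation produces a valid configuration. -/
lemma exists_valid (n : ℤ) (hn : 1 ≤ n) :
    ∃ x : ℤ × ℤ → WangTile Lbl, ValidConfig (Tmet n) x := by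
  have hn' : (1 : ℝ) ≤ n := by exact_mod_cast hn
  obtain ⟨θ, hθ, hβ⟩ : ∃ θ : ℝ, 0 < θ ∧ θ * (n + θ) = 1 := by
    have hsq := Real.sq_sqrt (show (0 : ℝ) ≤ n ^ 2 + 4 by positivity)
    have hlt : (n : ℝ) < √(n ^ 2 + 4) := Real.lt_sqrt_of_sq_lt (by linarith)
    exact ⟨(√(n ^ 2 + 4) - n) / 2, by linarith, by linear_combination hsq / 4⟩
  have hθ' : θ < 1 := by nlinarith
  refine ⟨fun m => codeTile n θ (Int.fract (m.1 * θ)) (Int.fract (m.2 * θ))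
    (Int.fract (((m.1 + 1 : ℤ) : ℝ) * θ)) (Int.fract (((m.2 + 1 : ℤ) : ℝ) * θ)),
    fun m => ?_, fun _ => rfl, fun _ => rfl⟩
  have hx := Int.fract_nonneg (m.1 * θ)
  have hx' := Int.fract_lt_one (m.1 * θ)
  have hy := Int.fract_nonneg (m.2 * θ)
  have hy' := Int.fract_lt_one (m.2 * θ)
  simp only [fract_succ_mul hθ hθ']
  split_ifs with hA hB hB
  · exact codeTile_white_mem hn hθ hβ hx hy hA hB
  · exact (codeTile_horizontal_mem hn hθ hβ hx hy' hA hB).1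
  · exact (codeTile_horizontal_mem hn hθ hβ hy hx' hB hA).2
  · exact codeTile_junction_mem hn hθ hβ hx' hy' hA hB

/-- the Wang shift `Ω_n` is aperiodic. -/
theorem stmt16 (n : ℤ) (hn : 1 ≤ n) :
    (∃ x : ℤ × ℤ → WangTile Lbl, ValidConfig (Tmet n) x) ∧
    ∀ x : ℤ × ℤ → WangTile Lbl, ValidConfig (Tmet n) x →
      ∀ k : ℤ × ℤ, k ≠ (0, 0) →
        (fun m : ℤ × ℤ => x (m.1 + k.1, m.2 + k.2)) ≠ x := by
  exact ⟨exists_valid n hn, fun x hx k hk =>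
    not_periodic n hn x ⟨fun m => (hx.1 m).1, hx.2⟩ k hk⟩
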